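/- Let ζ₆ = e^{πi/3}, let Λ = ℤ[ζ₆] × ℤ[ζ₆] ⊆ ℂ² (Eisenstein integers in each coordinate), and let σ be the ℂ-linear automorphism of ℂ² given by multiplication by ζ₃ = ζ₆² in both coordinates. Then σ(Λ) = Λ, σ has order 3, and there exists a generator vol of ⋀⁴Λ such that the fixed submodule {x ∈ ⋀²Λ : ⋀²(σ|_Λ)(x) = x}, with the restriction of the wedge form determined by vol, is isometric to U⊕A₂(−1). -/

import Mathlib

set_option synthInstance.maxHeartbeats 1000000
set_option maxHeartbeats 1000000

open ExteriorAlgebra Module Matrix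

noncomputable section

/-- `Λ` is a `ℤ`-lattice in `ℂ²`: it is the `ℤ`-span of an `ℝ`-basis of `ℂ²`. -/
def IsComplexTorusLattice (Λ : Submodule ℤ (ℂ × ℂ)) : Prop :=
  ∃ b : Basis (Fin 4) ℝ (ℂ × ℂ), Λ = Submodule.span ℤ (Set.range b)

/-- The image of the `n`-th exterior power under the algebra morphism induced by a linear map
lands in the `n`-th exterior power. -/
lemma map_mem_exteriorPower {R M N : Type*} [CommRing R] [AddCommGroup M] [Module R M]
    [AddCommGroup N] [Module R N] (f : M →ₗ[R] N) (n : ℕ) {x : ExteriorAlgebra R M}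
    (hx : x ∈ ⋀[R]^n M) : ExteriorAlgebra.map f x ∈ ⋀[R]^n N := by
  rw [← ExteriorAlgebra.ιMulti_span_fixedDegree] at hx ⊢
  induction hx using Submodule.span_induction with
  | mem y hy =>
      obtain ⟨m, rfl⟩ := hy
      rw [ExteriorAlgebra.map_apply_ιMulti]
      exact Submodule.subset_span ⟨f ∘ m, rfl⟩
  | zero => simp
  | add a b _ _ ha hb => rw [map_add]; exact Submodule.add_mem _ ha hb
  | smul r a _ ha => rw [_root_.map_smul]; exact Submodule.smul_mem _ r ha

/-- The `n`-th exterior power of a linear map. -/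
def extPowMap {R M N : Type*} [CommRing R] [AddCommGroup M] [Module R M]
    [AddCommGroup N] [Module R N] (n : ℕ) (f : M →ₗ[R] N) : ⋀[R]^n M →ₗ[R] ⋀[R]^n N :=
  LinearMap.restrict (ExteriorAlgebra.map f).toLinearMap
    (fun _ hx => map_mem_exteriorPower f n hx)

/-- The automorphism `σ` of `ℂ²` maps the lattice `Λ` onto itself. -/
def PreservesLattice (σ : (ℂ × ℂ) ≃ₗ[ℂ] (ℂ × ℂ)) (Λ : Submodule ℤ (ℂ × ℂ)) : Prop :=
  Λ.map ((σ.restrictScalars ℤ : (ℂ × ℂ) ≃ₗ[ℤ] (ℂ × ℂ)) : (ℂ × ℂ) →ₗ[ℤ] (ℂ × ℂ)) = Λ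

/-- The restriction `σ|_Λ` of `σ` to the lattice `Λ`, as a `ℤ`-linear automorphism. -/
def latRestrict (σ : (ℂ × ℂ) ≃ₗ[ℂ] (ℂ × ℂ)) (Λ : Submodule ℤ (ℂ × ℂ))
    (h : PreservesLattice σ Λ) : ↥Λ ≃ₗ[ℤ] ↥Λ :=
  (σ.restrictScalars ℤ).ofSubmodules Λ Λ h

/-- The induced endomorphism `⋀²(σ|_Λ)` of `⋀²Λ`. -/
def extSq (σ : (ℂ × ℂ) ≃ₗ[ℂ] (ℂ × ℂ)) (Λ : Submodule ℤ (ℂ × ℂ))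
    (h : PreservesLattice σ Λ) : Module.End ℤ (⋀[ℤ]^2 ↥Λ) :=
  extPowMap 2 (latRestrict σ Λ h).toLinearMap

/-- The invariant lattice `T = {x ∈ ⋀²Λ : ⋀²(σ|_Λ)(x) = x}`. -/
def invLat (σ : (ℂ × ℂ) ≃ₗ[ℂ] (ℂ × ℂ)) (Λ : Submodule ℤ (ℂ × ℂ))
    (h : PreservesLattice σ Λ) : Submodule ℤ (⋀[ℤ]^2 ↥Λ) :=
  LinearMap.ker (extSq σ Λ h - LinearMap.id)

/-- `b` is the wedge form on `⋀²Λ` determined by the generator `vol` of `⋀⁴Λ`, i.e.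
`x ∧ y = b(x,y) • vol`. -/
def IsWedgeForm (Λ : Submodule ℤ (ℂ × ℂ)) (vol : ⋀[ℤ]^4 ↥Λ)
    (b : ⋀[ℤ]^2 ↥Λ →ₗ[ℤ] ⋀[ℤ]^2 ↥Λ →ₗ[ℤ] ℤ) : Prop :=
  ∀ x y : ⋀[ℤ]^2 ↥Λ, (x : ExteriorAlgebra ℤ ↥Λ) * (y : ExteriorAlgebra ℤ ↥Λ)
    = b x y • (vol : ExteriorAlgebra ℤ ↥Λ)

/-- The restriction of the form `b` to the submodule `T` admits Gram matrix `G`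
in some basis; i.e. `(T, b|_T)` is isometric to the lattice with Gram matrix `G`. -/
def HasGramMatrix {M : Type*} [AddCommGroup M] [Module ℤ M] (b : M →ₗ[ℤ] M →ₗ[ℤ] ℤ)
    (T : Submodule ℤ M) {n : ℕ} (G : Matrix (Fin n) (Fin n) ℤ) : Prop :=
  ∃ v : Basis (Fin n) ℤ ↥T, ∀ i j, b (v i : M) (v j : M) = G i j

/-- The six increasing pairs of indices in `Fin 4`, in lexicographic order. -/
def increasingPair : Fin 6 → Fin 2 ↪o Fin 4 :=
  ![OrderEmbedding.ofStrictMono ![0, 1] (by decide),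
    OrderEmbedding.ofStrictMono ![0, 2] (by decide),
    OrderEmbedding.ofStrictMono ![0, 3] (by decide),
    OrderEmbedding.ofStrictMono ![1, 2] (by decide),
    OrderEmbedding.ofStrictMono ![1, 3] (by decide),
    OrderEmbedding.ofStrictMono ![2, 3] (by decide)]

lemma increasingPair_injective : Function.Injective increasingPair := by
  have key : ∀ i j, increasingPair i 0 = increasingPair j 0 →
      increasingPair i 1 = increasingPair j 1 → i = j := by decide
  exact fun i j h => key i j (DFunLike.congr_fun h 0) (DFunLike.congr_fun h 1)

lemma increasingPair_bijective :
    Function.Bijective fun i => Set.powersetCard.ofFinEmbEquiv (increasingPair i) := by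
  refine (Nat.bijective_iff_injective_and_card _).2
    ⟨Set.powersetCard.ofFinEmbEquiv.injective.comp increasingPair_injective, ?_⟩
  rw [Set.powersetCard.card]
  simp [Nat.choose]

section ExteriorSquare

variable {R M : Type*} [CommRing R] [AddCommGroup M] [Module R M]

/-- The basis of `⋀²M` given by the `e i ∧ e j` with `i < j`, in lexicographic order. -/
def extSqBasis (e : Basis (Fin 4) R M) : Basis (Fin 6) R (⋀[R]^2 M) :=
  (e.exteriorPower 2).reindex (Equiv.ofBijective _ increasingPair_bijective).symm

lemma coe_extSqBasis (e : Basis (Fin 4) R M) (i : Fin 6) :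
    (extSqBasis e i : ExteriorAlgebra R M) =
      ι R (e (increasingPair i 0)) * ι R (e (increasingPair i 1)) := by
  simp [extSqBasis, exteriorPower.ιMulti_family, ExteriorAlgebra.ιMulti_apply]
  rfl

lemma exteriorPower_four_basis_apply (e : Basis (Fin 4) R M) (s : Set.powersetCard (Fin 4) 4) :
    e.exteriorPower 4 s = exteriorPower.ιMulti R 4 e := by
  have h : s = Set.powersetCard.ofFinEmbEquiv (OrderIso.refl (Fin 4)).toOrderEmbedding := by
    apply Subtype.ext
    have huniv (t : Set.powersetCard (Fin 4) 4) : t.val = Finset.univ :=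
      (Finset.card_eq_iff_eq_univ _).1 t.2
    rw [huniv, huniv]
  rw [exteriorPower.basis_apply, exteriorPower.ιMulti_family, h, Equiv.symm_apply_apply]
  rfl

lemma span_ιMulti_basis_eq_top (e : Basis (Fin 4) R M) :
    Submodule.span R {exteriorPower.ιMulti R 4 e} = ⊤ := by
  rw [← (e.exteriorPower 4).span_eq]
  congr 1
  ext x
  constructor
  · rintro rfl
    exact ⟨Set.powersetCard.ofFinEmbEquiv (OrderIso.refl (Fin 4)).toOrderEmbedding,
      exteriorPower_four_basis_apply e _⟩
  · rintro ⟨s, rfl⟩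
    exact exteriorPower_four_basis_apply e s

lemma smul_ιMulti_basis_injective (e : Basis (Fin 4) R M) :
    Function.Injective fun c : R => c • exteriorPower.ιMulti R 4 e := by
  intro c d h
  let s := Set.powersetCard.ofFinEmbEquiv (OrderIso.refl (Fin 4)).toOrderEmbedding
  simpa [← exteriorPower_four_basis_apply e s, -exteriorPower.coe_basis] using
    congrArg (fun x => (e.exteriorPower 4).repr x s) h

lemma coe_ιMulti_four (e : Fin 4 → M) :
    (exteriorPower.ιMulti R 4 e : ExteriorAlgebra R M) =
      ι R (e 0) * (ι R (e 1) * (ι R (e 2) * ι R (e 3))) := by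
  simp [ExteriorAlgebra.ιMulti_apply]
  rfl

lemma coe_extPowMap (f : M →ₗ[R] M) (x : ⋀[R]^2 M) :
    (extPowMap 2 f x : ExteriorAlgebra R M) = ExteriorAlgebra.map f x := rfl

lemma ι_mul_ι_swap (x y : M) : ι R x * ι R y = -(ι R y * ι R x) :=
  eq_neg_of_add_eq_zero_left (ι_add_mul_swap x y)

lemma ι_mul_ι_mul_swap (x y : M) (z : ExteriorAlgebra R M) :
    ι R x * (ι R y * z) = -(ι R y * (ι R x * z)) := by
  rw [← mul_assoc, ι_mul_ι_swap, neg_mul, mul_assoc]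

lemma ι_mul_ι_mul_self (x : M) (z : ExteriorAlgebra R M) : ι R x * (ι R x * z) = 0 := by
  rw [← mul_assoc, ι_sq_zero, zero_mul]

/-- The matrix of `⋀²f` in the lexicographic basis, for `f` acting on a rank four module as two
copies of multiplication by `ζ₃` on `ℤ[ζ₆]` with basis `1, ζ₆`. -/
lemma extPowMap_extSqBasis (e : Basis (Fin 4) R M) (f : M →ₗ[R] M)
    (h0 : f (e 0) = e 1 - e 0) (h1 : f (e 1) = -e 0)
    (h2 : f (e 2) = e 3 - e 2) (h3 : f (e 3) = -e 2) (i : Fin 6) :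
    extPowMap 2 f (extSqBasis e i) =
      ![extSqBasis e 0,
        extSqBasis e 1 - extSqBasis e 2 - extSqBasis e 3 + extSqBasis e 4,
        extSqBasis e 1 - extSqBasis e 3,
        extSqBasis e 1 - extSqBasis e 2,
        extSqBasis e 1,
        extSqBasis e 5] i := by
  apply Subtype.ext
  rw [coe_extPowMap]
  fin_cases i <;>
  · simp [coe_extSqBasis, increasingPair, h0, h1, h2, h3, sub_mul, mul_sub]
    try rw [ι_mul_ι_swap (e 1) (e 0)]
    try rw [ι_mul_ι_swap (e 3) (e 2)]
    try abel

end ExteriorSquare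

section Invariants

variable {M : Type*} [AddCommGroup M] [Module ℤ M]

/-- A basis of the `⋀²f`-invariants, for `f` as in `extPowMap_extSqBasis`. -/
def invariantVector (e : Basis (Fin 4) ℤ M) : Fin 4 → ⋀[ℤ]^2 M :=
  ![extSqBasis e 0, extSqBasis e 5, extSqBasis e 1 - extSqBasis e 3 + extSqBasis e 4,
    extSqBasis e 2 - extSqBasis e 3]

lemma linearIndependent_invariantVector (e : Basis (Fin 4) ℤ M) :
    LinearIndependent ℤ (invariantVector e) := by
  rw [Fintype.linearIndependent_iff]
  intro g hg
  have hc (k : Fin 6) := congrArg (fun x => (extSqBasis e).repr x k) hg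
  have c0 := hc 0
  have c1 := hc 1
  have c2 := hc 2
  have c5 := hc 5
  simp [Fin.sum_univ_four, invariantVector] at c0 c1 c2 c5
  intro i
  fin_cases i <;> assumption

lemma span_invariantVector (e : Basis (Fin 4) ℤ M) (f : M →ₗ[ℤ] M)
    (h0 : f (e 0) = e 1 - e 0) (h1 : f (e 1) = -e 0)
    (h2 : f (e 2) = e 3 - e 2) (h3 : f (e 3) = -e 2) :
    Submodule.span ℤ (Set.range (invariantVector e)) =
      LinearMap.ker (extPowMap 2 f - LinearMap.id) := by
  have hf := extPowMap_extSqBasis e f h0 h1 h2 h3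
  apply le_antisymm
  · rw [Submodule.span_le]
    rintro _ ⟨i, rfl⟩
    refine sub_eq_zero.2 (?_ : extPowMap 2 f (invariantVector e i) = invariantVector e i)
    fin_cases i <;> simp [invariantVector, hf]
    abel
  · intro x hx
    replace hx : extPowMap 2 f x = x := sub_eq_zero.1 hx
    have hsum := (extSqBasis e).sum_repr x
    set c := (extSqBasis e).repr x
    have hc (k : Fin 6) : (extSqBasis e).repr (extPowMap 2 f x) k = c k := by rw [hx]
    rw [← hsum] at hc
    have c1 := hc 1
    have c4 := hc 4
    simp [Fin.sum_univ_six, hf] at c1 c4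
    rw [Submodule.mem_span_range_iff_exists_fun]
    refine ⟨![c 0, c 5, c 1, c 2], ?_⟩
    rw [← hsum]
    have c3 : c 3 = -c 1 - c 2 := by linarith
    simp [Fin.sum_univ_four, Fin.sum_univ_six, invariantVector, c3, ← c4]
    module

lemma invariantVector_mul (e : Basis (Fin 4) ℤ M) (i j : Fin 4) :
    (invariantVector e i : ExteriorAlgebra ℤ M) * (invariantVector e j : ExteriorAlgebra ℤ M) =
      (!![0, 1, 0, 0; 1, 0, 0, 0; 0, 0, -2, -1; 0, 0, -1, -2] : Matrix (Fin 4) (Fin 4) ℤ) i j •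
        (exteriorPower.ιMulti ℤ 4 e : ExteriorAlgebra ℤ M) := by
  have s21 := ι_mul_ι_swap (R := ℤ) (e 2) (e 1)
  have s31 := ι_mul_ι_swap (R := ℤ) (e 3) (e 1)
  have s32 := ι_mul_ι_swap (R := ℤ) (e 3) (e 2)
  have t10 := ι_mul_ι_mul_swap (R := ℤ) (e 1) (e 0)
  have t20 := ι_mul_ι_mul_swap (R := ℤ) (e 2) (e 0)
  have t30 := ι_mul_ι_mul_swap (R := ℤ) (e 3) (e 0)
  have t21 := ι_mul_ι_mul_swap (R := ℤ) (e 2) (e 1)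
  have t31 := ι_mul_ι_mul_swap (R := ℤ) (e 3) (e 1)
  have t32 := ι_mul_ι_mul_swap (R := ℤ) (e 3) (e 2)
  rw [coe_ιMulti_four]
  fin_cases i <;> fin_cases j <;>
  · simp [invariantVector, coe_extSqBasis, increasingPair, sub_mul, mul_sub, add_mul, mul_add,
      mul_assoc, two_mul, ι_mul_ι_mul_self, s21, s31, s32, t10, t20, t30, t21,
      t31, t32]
    try abel

lemma hasGramMatrix_invariants (e : Basis (Fin 4) ℤ M) (f : M →ₗ[ℤ] M)
    (h0 : f (e 0) = e 1 - e 0) (h1 : f (e 1) = -e 0)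
    (h2 : f (e 2) = e 3 - e 2) (h3 : f (e 3) = -e 2)
    (b : ⋀[ℤ]^2 M →ₗ[ℤ] ⋀[ℤ]^2 M →ₗ[ℤ] ℤ)
    (hb : ∀ x y : ⋀[ℤ]^2 M, (x : ExteriorAlgebra ℤ M) * (y : ExteriorAlgebra ℤ M) =
      b x y • (exteriorPower.ιMulti ℤ 4 e : ExteriorAlgebra ℤ M)) :
    HasGramMatrix b (LinearMap.ker (extPowMap 2 f - LinearMap.id))
      !![0, 1, 0, 0; 1, 0, 0, 0; 0, 0, -2, -1; 0, 0, -1, -2] := by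
  rw [← span_invariantVector e f h0 h1 h2 h3]
  refine ⟨Basis.span (linearIndependent_invariantVector e), fun i j => ?_⟩
  rw [Basis.span_apply, Basis.span_apply]
  have h := (hb (invariantVector e i) (invariantVector e j)).symm.trans (invariantVector_mul e i j)
  exact smul_ιMulti_basis_injective e (Subtype.ext h)

end Invariants

section Eisenstein

lemma exp_pi_mul_I_div_three_sq :
    Complex.exp (Real.pi * Complex.I / 3) ^ 2 = Complex.exp (Real.pi * Complex.I / 3) - 1 := by
  have h : (Real.pi * Complex.I / 3 : ℂ) = ((Real.pi / 3 : ℝ) : ℂ) * Complex.I := by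
    push_cast; ring
  rw [h, Complex.exp_mul_I, ← Complex.ofReal_cos, ← Complex.ofReal_sin, Real.cos_pi_div_three,
    Real.sin_pi_div_three]
  have h3 : ((√3 : ℝ) : ℂ) ^ 2 = 3 := by
    rw [← Complex.ofReal_pow, Real.sq_sqrt (by norm_num)]; norm_num
  push_cast
  linear_combination (1 / 4 : ℂ) * Complex.I ^ 2 * h3 + (3 / 4 : ℂ) * Complex.I_sq

variable {ζ : ℂ}

lemma int_pair_eq_zero_of_sq_eq (hζ : ζ ^ 2 = ζ - 1) {a b : ℤ} (h : (a : ℂ) + b * ζ = 0) :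
    a = 0 ∧ b = 0 := by
  have hC : ((a ^ 2 + a * b + b ^ 2 : ℤ) : ℂ) = 0 := by
    push_cast
    linear_combination (a + b - b * ζ : ℂ) * h + (b : ℂ) ^ 2 * hζ
  have hZ : a ^ 2 + a * b + b ^ 2 = 0 := by exact_mod_cast hC
  constructor <;> nlinarith [sq_nonneg (a + 2 * b), sq_nonneg (2 * a + b), sq_nonneg a, sq_nonneg b]

lemma mem_span_one_pair {z : ℂ} :
    z ∈ Submodule.span ℤ ({1, ζ} : Set ℂ) ↔ ∃ a b : ℤ, (a : ℂ) + b * ζ = z := by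
  simp [Submodule.mem_span_pair]

/-- The standard `ℤ`-basis `(1, 0), (ζ, 0), (0, 1), (0, ζ)` of `ℤ[ζ] × ℤ[ζ]`. -/
def eisensteinSqVector (ζ : ℂ) : Fin 4 → ℂ × ℂ := ![(1, 0), (ζ, 0), (0, 1), (0, ζ)]

lemma linearIndependent_eisensteinSqVector (hζ : ζ ^ 2 = ζ - 1) :
    LinearIndependent ℤ (eisensteinSqVector ζ) := by
  rw [Fintype.linearIndependent_iff]
  intro g hg
  have h1 := congrArg Prod.fst hg
  have h2 := congrArg Prod.snd hg
  simp [Fin.sum_univ_four, eisensteinSqVector] at h1 h2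
  obtain ⟨ha, hb⟩ := int_pair_eq_zero_of_sq_eq hζ h1
  obtain ⟨hc, hd⟩ := int_pair_eq_zero_of_sq_eq hζ h2
  intro i
  fin_cases i <;> assumption

lemma span_eisensteinSqVector :
    Submodule.span ℤ (Set.range (eisensteinSqVector ζ)) =
      (Submodule.span ℤ ({1, ζ} : Set ℂ)).prod (Submodule.span ℤ ({1, ζ} : Set ℂ)) := by
  ext ⟨z, w⟩
  rw [Submodule.mem_prod, mem_span_one_pair, mem_span_one_pair,
    Submodule.mem_span_range_iff_exists_fun]
  constructor
  · rintro ⟨c, hc⟩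
    have h1 := congrArg Prod.fst hc
    have h2 := congrArg Prod.snd hc
    simp [Fin.sum_univ_four, eisensteinSqVector] at h1 h2
    exact ⟨⟨c 0, c 1, h1⟩, ⟨c 2, c 3, h2⟩⟩
  · rintro ⟨⟨a, b, h⟩, ⟨c, d, h'⟩⟩
    refine ⟨![a, b, c, d], ?_⟩
    ext <;> simp [Fin.sum_univ_four, eisensteinSqVector, h, h']

lemma sq_mul_mem_span_one_pair (hζ : ζ ^ 2 = ζ - 1) {z : ℂ}
    (hz : z ∈ Submodule.span ℤ ({1, ζ} : Set ℂ)) :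
    ζ ^ 2 * z ∈ Submodule.span ℤ ({1, ζ} : Set ℂ) := by
  rw [mem_span_one_pair] at hz ⊢
  obtain ⟨a, b, rfl⟩ := hz
  refine ⟨-a - b, a, ?_⟩
  push_cast
  linear_combination (-a - b * ζ - b : ℂ) * hζ

lemma pow_six_eq_one (hζ : ζ ^ 2 = ζ - 1) : ζ ^ 6 = 1 := by
  linear_combination (ζ ^ 4 + ζ ^ 3 - ζ - 1) * hζ

end Eisenstein

/-- For `Λ = ℤ[ζ₆] × ℤ[ζ₆]` (Eisenstein integers, `ζ₆ = exp(πi/3)`) and `σ` the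
multiplication by `ζ₃ = ζ₆²` in both coordinates: `σ` preserves `Λ`, has order 3, and for a
suitable generator `vol` of `⋀⁴Λ` the invariant lattice, with the wedge form determined by
`vol`, is isometric to `U ⊕ A₂(-1)`. -/
theorem stmt_16 (ζ₆ : ℂ) (hζ : ζ₆ = Complex.exp (Real.pi * Complex.I / 3))
    (Λ : Submodule ℤ (ℂ × ℂ))
    (hΛ : Λ = (Submodule.span ℤ ({1, ζ₆} : Set ℂ)).prod
        (Submodule.span ℤ ({1, ζ₆} : Set ℂ)))
    (σ : (ℂ × ℂ) ≃ₗ[ℂ] (ℂ × ℂ))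
    (hσ : ∀ z w : ℂ, σ (z, w) = (ζ₆ ^ 2 * z, ζ₆ ^ 2 * w)) :
    PreservesLattice σ Λ ∧
    orderOf σ = 3 ∧
    ∀ (h : PreservesLattice σ Λ),
      ∃ vol : ⋀[ℤ]^4 ↥Λ, Submodule.span ℤ {vol} = ⊤ ∧
        ∀ b : ⋀[ℤ]^2 ↥Λ →ₗ[ℤ] ⋀[ℤ]^2 ↥Λ →ₗ[ℤ] ℤ, IsWedgeForm Λ vol b →
          HasGramMatrix b (invLat σ Λ h)
            !![0, 1, 0, 0; 1, 0, 0, 0; 0, 0, -2, -1; 0, 0, -1, -2] := by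
  have hq : ζ₆ ^ 2 = ζ₆ - 1 := by rw [hζ]; exact exp_pi_mul_I_div_three_sq
  have h6 := pow_six_eq_one hq
  have hmaps {x : ℂ × ℂ} (hx : x ∈ Λ) : σ x ∈ Λ := by
    obtain ⟨z, w⟩ := x
    rw [hΛ, Submodule.mem_prod] at hx ⊢
    rw [hσ]
    exact ⟨sq_mul_mem_span_one_pair hq hx.1, sq_mul_mem_span_one_pair hq hx.2⟩
  have hcube (x : ℂ × ℂ) : σ (σ (σ x)) = x := by
    obtain ⟨z, w⟩ := x
    rw [hσ, hσ, hσ]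
    ext
    · linear_combination z * h6
    · linear_combination w * h6
  refine ⟨?_, ?_, fun h => ?_⟩
  · apply le_antisymm
    · rintro _ ⟨x, hx, rfl⟩
      exact hmaps hx
    · exact fun x hx => ⟨σ (σ x), hmaps (hmaps hx), hcube x⟩
  · refine orderOf_eq_prime (LinearEquiv.ext hcube) fun h1 => ?_
    have h2 : ζ₆ ^ 2 = 1 := by
      have := (hσ 1 0).symm.trans (LinearEquiv.congr_fun h1 (1, 0))
      simpa using congrArg Prod.fst this
    have h3 : (3 : ℂ) = 0 := by
      linear_combination (ζ₆ + 2) * hq - (ζ₆ + 1) * h2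
    norm_num at h3
  · have hspan : Submodule.span ℤ (Set.range (eisensteinSqVector ζ₆)) = Λ :=
      span_eisensteinSqVector.trans hΛ.symm
    let e : Basis (Fin 4) ℤ Λ :=
      (Basis.span (linearIndependent_eisensteinSqVector hq)).map (LinearEquiv.ofEq _ _ hspan)
    have he (i : Fin 4) : (e i : ℂ × ℂ) = eisensteinSqVector ζ₆ i := by
      simp [e, Basis.span_apply]
    have hσe (i : Fin 4) : ((latRestrict σ Λ h).toLinearMap (e i) : ℂ × ℂ) =
        σ (eisensteinSqVector ζ₆ i) := by
      rw [← he]; rfl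
    refine ⟨exteriorPower.ιMulti ℤ 4 e, span_ιMulti_basis_eq_top e, fun b hb =>
      hasGramMatrix_invariants e _ ?_ ?_ ?_ ?_ b hb⟩ <;>
    · apply Subtype.ext
      rw [hσe]
      simp [he, eisensteinSqVector, hσ]
      first | linear_combination hq | linear_combination (ζ₆ + 1) * hq
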